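/- Let Γ be a connected bipartite (δ_1,δ_2)-semiregular graph on n = n_1 + n_2 vertices with d+1 distinct eigenvalues, where d is even and m(0) ≠ |n_1 − n_2|. Then the average number of vertices at distance d from a vertex of V_1 is at most the value at λ_0 of the highest-degree orthogonal polynomial for ⟨·,·⟩_{V_1}: k̄_{1,d} ≤ p_{1,d}(λ_0). -/

import Mathlib

open Polynomial Finset Matrix

/-- The discrete scalar product `⟨f,g⟩ = ∑_{i∈s} w i · f(λ i) · g(λ i)` on a mesh. -/
def discInner (s : Finset ℕ) (lam w : ℕ → ℝ) (f g : Polynomial ℝ) : ℝ :=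
  ∑ i ∈ s, w i * f.eval (lam i) * g.eval (lam i)

/-- `Γ_i(u)`: the set of vertices at distance `i` from `u`. -/
noncomputable def sphere {V : Type*} [Fintype V] [DecidableEq V] (G : SimpleGraph V)
    (u : V) (i : ℕ) : Finset V :=
  Finset.univ.filter (fun v => G.dist u v = i)

/-!
Since the eigenvalues are distinct, the spectral projection `E 0` is the Lagrange polynomial
`ℓ₀(A)` of degree `d`. Perron's uniqueness argument makes `E 0` constant on `S × S` whenever all
vertices of `S` have the same degree and `√deg` is an eigenvector of `A`. Orthogonality of the
predistance polynomial `p` of degree `d` to lower degrees determines the ratio of the leading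
coefficients of `ℓ₀` and `p`, while only leading terms contribute to entries at distance `d`. Hence
`p(A) u v = 1` whenever `u ∈ S` and `dist u v = d`, and so
`k_d(u) ≤ ∑ v, (p(A) u v)² = (p(A)²) u u`, whose average over `S` is `‖p‖² = p(λ₀)`.
-/

section Polynomial

theorem degree_C_coeff_mul_sub_C_coeff_mul_lt {R : Type*} [CommRing R] {f g : R[X]} {n : ℕ}
    (hf : f.natDegree ≤ n) (hg : g.natDegree ≤ n) :
    (C (g.coeff n) * f - C (f.coeff n) * g).degree < n := by
  rw [degree_lt_iff_coeff_zero]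
  intro m hm
  rw [coeff_sub, coeff_C_mul, coeff_C_mul]
  rcases hm.eq_or_lt with rfl | hlt
  · ring
  · rw [coeff_eq_zero_of_natDegree_lt (hf.trans_lt hlt),
      coeff_eq_zero_of_natDegree_lt (hg.trans_lt hlt), mul_zero, mul_zero, sub_zero]

theorem aeval_mul_of_mul_eq_smul {K R : Type*} [CommRing K] [Ring R] [Algebra K R] {a b : R} {μ : K}
    (h : a * b = μ • b) (f : K[X]) : aeval a f * b = f.eval μ • b := by
  have hlmul := Module.End.aeval_apply_of_mem_apply_eq_smul (f := Algebra.lmul K R a) (p := f) h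
  rwa [aeval_algHom_apply] at hlmul

end Polynomial

section PredistancePolynomial

variable {s : Finset ℕ} {lam w : ℕ → ℝ} {k : ℕ} {p : ℝ[X]}

theorem discInner_sub_right (f g h : ℝ[X]) :
    discInner s lam w f (g - h) = discInner s lam w f g - discInner s lam w f h := by
  simp only [discInner, eval_sub, mul_sub, sum_sub_distrib]

theorem discInner_C_mul_right (c : ℝ) (f g : ℝ[X]) :
    discInner s lam w f (C c * g) = c * discInner s lam w f g := by
  simp only [discInner, eval_mul, eval_C, mul_sum]
  exact sum_congr rfl fun i _ => by ring

theorem discInner_lagrangeBasis_right (hlam : Set.InjOn lam s) {i : ℕ} (hi : i ∈ s) (f : ℝ[X]) :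
    discInner s lam w f (Lagrange.basis s lam i) = w i * f.eval (lam i) := by
  rw [discInner, sum_eq_single_of_mem i hi, Lagrange.eval_basis_self hlam hi, mul_one]
  intro j hj hji
  rw [Lagrange.eval_basis_of_ne hji.symm hj, mul_zero]

/-- `p` is the `k`-th predistance polynomial of the form `discInner s lam w`: the polynomial of
degree `k` orthogonal to all polynomials of smaller degree, normalized by `‖p‖² = p(lam 0)`.
The form may be degenerate. -/
structure IsPredistancePolynomial (s : Finset ℕ) (lam w : ℕ → ℝ) (k : ℕ) (p : ℝ[X]) : Prop where
  degree_eq : p.degree = k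
  orthogonal : ∀ r : ℝ[X], r.degree < k → discInner s lam w p r = 0
  inner_self : discInner s lam w p p = p.eval (lam 0)

namespace IsPredistancePolynomial

theorem natDegree_eq (hp : IsPredistancePolynomial s lam w k p) : p.natDegree = k :=
  natDegree_eq_of_degree_eq_some hp.degree_eq

theorem coeff_ne_zero (hp : IsPredistancePolynomial s lam w k p) : p.coeff k ≠ 0 :=
  coeff_ne_zero_of_eq_degree hp.degree_eq

theorem coeff_mul_discInner (hp : IsPredistancePolynomial s lam w k p) {f : ℝ[X]}
    (hf : f.natDegree ≤ k) :
    p.coeff k * discInner s lam w p f = f.coeff k * p.eval (lam 0) := by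
  have h := hp.orthogonal _ (degree_C_coeff_mul_sub_C_coeff_mul_lt hf hp.natDegree_eq.le)
  rwa [discInner_sub_right, discInner_C_mul_right, discInner_C_mul_right, sub_eq_zero,
    hp.inner_self] at h

theorem of_orthogonal_family {p : ℕ → ℝ[X]} (hdeg : ∀ i ≤ k, (p i).degree = i)
    (horth : ∀ i < k, discInner s lam w (p k) (p i) = 0)
    (hnorm : discInner s lam w (p k) (p k) = (p k).eval (lam 0)) :
    IsPredistancePolynomial s lam w k (p k) where
  degree_eq := hdeg k le_rfl
  inner_self := hnorm
  orthogonal := by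
    suffices ∀ n ≤ k, ∀ r : ℝ[X], r.degree < n → discInner s lam w (p k) r = 0 from this k le_rfl
    intro n
    induction n with
    | zero =>
      intro _ r hr
      have : r = 0 := by simpa [Nat.WithBot.lt_zero_iff] using hr
      simp [this, discInner]
    | succ n ih =>
      intro hn r hr
      have hrn : r.natDegree ≤ n := natDegree_le_iff_degree_le.mpr (Order.lt_succ_iff.mp hr)
      have hpn := hdeg n (by omega)
      have h := ih (by omega) _
        (degree_C_coeff_mul_sub_C_coeff_mul_lt hrn (natDegree_eq_of_degree_eq_some hpn).le)
      rw [discInner_sub_right, discInner_C_mul_right, discInner_C_mul_right, horth n hn, mul_zero,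
        sub_zero] at h
      exact (mul_eq_zero.mp h).resolve_left (coeff_ne_zero_of_eq_degree hpn)

end IsPredistancePolynomial

end PredistancePolynomial

section SpectralDecomposition

/-- `A = ∑ lam i • E i` is the spectral decomposition of `A` over `d + 1` eigenvalues, listed in
decreasing order. As these are distinct, the two equations force `E i = ℓᵢ(A)` for the Lagrange
polynomials `ℓᵢ`, so symmetry and orthogonality of the idempotents need not be stored. A vanishing
`E i` is allowed. -/
structure IsSpectralDecomposition {R : Type*} [Ring R] [Algebra ℝ R] (A : R) (d : ℕ) (lam : ℕ → ℝ)
    (E : ℕ → R) : Prop where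
  strictAntiOn : StrictAntiOn lam (Set.Iic d)
  sum_eq_one : ∑ i ∈ range (d + 1), E i = 1
  mul_eq_smul : ∀ i ≤ d, A * E i = lam i • E i

namespace IsSpectralDecomposition

variable {R : Type*} [Ring R] [Algebra ℝ R] {A : R} {d : ℕ} {lam : ℕ → ℝ} {E : ℕ → R}

theorem injOn_range (h : IsSpectralDecomposition A d lam E) :
    Set.InjOn lam (range (d + 1)) :=
  h.strictAntiOn.injOn.mono fun _ hi => mem_range_succ_iff.mp hi

theorem aeval_eq_sum (h : IsSpectralDecomposition A d lam E) (f : ℝ[X]) :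
    aeval A f = ∑ i ∈ range (d + 1), f.eval (lam i) • E i := by
  rw [← mul_one (aeval A f), ← h.sum_eq_one, mul_sum]
  exact sum_congr rfl fun i hi =>
    aeval_mul_of_mul_eq_smul (h.mul_eq_smul i (mem_range_succ_iff.mp hi)) f

theorem aeval_lagrangeBasis (h : IsSpectralDecomposition A d lam E) {i : ℕ}
    (hi : i ∈ range (d + 1)) : aeval A (Lagrange.basis (range (d + 1)) lam i) = E i := by
  rw [h.aeval_eq_sum, sum_eq_single_of_mem i hi, Lagrange.eval_basis_self h.injOn_range hi,
    one_smul]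
  intro j hj hji
  rw [Lagrange.eval_basis_of_ne hji.symm hj, zero_smul]

theorem le_of_mem_spectrum (h : IsSpectralDecomposition A d lam E) {θ : ℝ}
    (hθ : θ ∈ spectrum ℝ A) : θ ≤ lam 0 := by
  have hnodal : aeval A (Lagrange.nodal (range (d + 1)) lam) = 0 := by
    rw [h.aeval_eq_sum]
    exact sum_eq_zero fun i hi => by rw [Lagrange.eval_nodal_at_node hi, zero_smul]
  have : Nontrivial R := by
    by_contra hR
    rw [not_nontrivial_iff_subsingleton] at hR
    simp [spectrum.of_subsingleton] at hθ
  have hroot := spectrum.subset_polynomial_aeval A (Lagrange.nodal (range (d + 1)) lam)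
    (Set.mem_image_of_mem _ hθ)
  rw [hnodal, spectrum.zero_eq, Set.mem_singleton_iff, Lagrange.eval_nodal, prod_eq_zero_iff]
    at hroot
  obtain ⟨i, hi, hθi⟩ := hroot
  rw [sub_eq_zero.mp hθi]
  exact h.strictAntiOn.antitoneOn (Set.mem_Iic.mpr d.zero_le)
    (Set.mem_Iic.mpr (mem_range_succ_iff.mp hi)) i.zero_le

end IsSpectralDecomposition

end SpectralDecomposition

section LocalMultiplicity

/-- The average over `u ∈ S` of the `u`-local multiplicities `(E i) u u`: the weights `w_{1,i}` for
`S = V₁`. -/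
noncomputable def meanLocalMultiplicity {V : Type*} (E : ℕ → Matrix V V ℝ) (S : Finset V) (i : ℕ) :
    ℝ :=
  (∑ u ∈ S, E i u u) / S.card

variable {V : Type*} [Fintype V] [DecidableEq V] {A : Matrix V V ℝ} {d : ℕ} {lam : ℕ → ℝ}
  {E : ℕ → Matrix V V ℝ} {S : Finset V}

theorem isSymm_aeval {K : Type*} [CommRing K] {B : Matrix V V K} (hB : B.IsSymm) (f : K[X]) :
    (aeval B f).IsSymm := by
  rw [Matrix.IsSymm, aeval_eq_sum_range, transpose_sum]
  exact sum_congr rfl fun n _ => (hB.pow n).smul _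

theorem discInner_meanLocalMultiplicity_self (hA : A.IsSymm)
    (h : IsSpectralDecomposition A d lam E) (f : ℝ[X]) :
    discInner (range (d + 1)) lam (meanLocalMultiplicity E S) f f
      = (∑ u ∈ S, ∑ v, aeval A f u v ^ 2) / S.card := by
  have hdiag (u : V) : ∑ v, aeval A f u v ^ 2
      = ∑ i ∈ range (d + 1), f.eval (lam i) ^ 2 * E i u u := by
    calc ∑ v, aeval A f u v ^ 2
        = aeval A (f * f) u u := by
          rw [map_mul, Matrix.mul_apply]
          exact sum_congr rfl fun v _ => by rw [(isSymm_aeval hA f).apply, sq]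
      _ = ∑ i ∈ range (d + 1), f.eval (lam i) ^ 2 * E i u u := by
          rw [h.aeval_eq_sum, Matrix.sum_apply]
          simp only [Matrix.smul_apply, eval_mul, sq, smul_eq_mul]
  simp only [hdiag]
  rw [sum_comm, discInner, sum_div]
  refine sum_congr rfl fun i _ => ?_
  rw [meanLocalMultiplicity, ← mul_sum]
  ring

theorem discInner_meanLocalMultiplicity_self_pos (hA : A.IsSymm)
    (h : IsSpectralDecomposition A d lam E) {f : ℝ[X]} {u v : V} (hu : u ∈ S)
    (huv : aeval A f u v ≠ 0) :
    0 < discInner (range (d + 1)) lam (meanLocalMultiplicity E S) f f := by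
  rw [discInner_meanLocalMultiplicity_self hA h]
  have hrow : 0 < ∑ v, aeval A f u v ^ 2 :=
    sum_pos' (fun _ _ => sq_nonneg _) ⟨v, mem_univ v, sq_pos_of_ne_zero huv⟩
  have hsum : 0 < ∑ u ∈ S, ∑ v, aeval A f u v ^ 2 :=
    sum_pos' (fun _ _ => sum_nonneg fun _ _ => sq_nonneg _) ⟨u, hu, hrow⟩
  exact div_pos hsum (Nat.cast_pos.mpr (card_pos.mpr ⟨u, hu⟩))

end LocalMultiplicity

section PositiveEigenvector

-- The ground state representation of the quadratic form of `θ - A`.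
theorem sum_sum_mul_div_sub_div_sq {V K : Type*} [Fintype V] [Field K] {A : Matrix V V K}
    (hA : A.IsSymm) {y : V → K} (hy : ∀ u, y u ≠ 0) {θ : K} (hAy : A *ᵥ y = θ • y) (x : V → K) :
    ∑ u, ∑ v, A u v * (y u * y v * (x u / y u - x v / y v) ^ 2)
      = 2 * (θ * x ⬝ᵥ x - x ⬝ᵥ A *ᵥ x) := by
  have hrow (u : V) : ∑ v, A u v * y v = θ * y u := congrFun hAy u
  have hsq : ∑ u, ∑ v, A u v * (x u ^ 2 / y u * y v) = θ * x ⬝ᵥ x := by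
    rw [dotProduct, mul_sum]
    refine sum_congr rfl fun u _ => ?_
    calc ∑ v, A u v * (x u ^ 2 / y u * y v)
        = x u ^ 2 / y u * ∑ v, A u v * y v := by
          rw [mul_sum]
          exact sum_congr rfl fun v _ => by ring
      _ = θ * (x u * x u) := by
          rw [hrow]
          field [hy u]
  have hsq' : ∑ u, ∑ v, A u v * (x v ^ 2 / y v * y u) = θ * x ⬝ᵥ x := by
    rw [sum_comm, ← hsq]
    exact sum_congr rfl fun u _ => sum_congr rfl fun v _ => by rw [hA.apply]
  have hcross : ∑ u, ∑ v, A u v * (x u * x v) = x ⬝ᵥ A *ᵥ x := by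
    simp only [dotProduct, mulVec, mul_sum]
    exact sum_congr rfl fun u _ => sum_congr rfl fun v _ => by ring
  have hexpand (u v : V) : A u v * (y u * y v * (x u / y u - x v / y v) ^ 2)
      = A u v * (x u ^ 2 / y u * y v) + A u v * (x v ^ 2 / y v * y u)
        - 2 * (A u v * (x u * x v)) := by
    have := hy u
    have := hy v
    field
  simp only [hexpand, sum_sub_distrib, sum_add_distrib, ← mul_sum]
  rw [hsq, hsq', hcross]
  ring

variable {V : Type*} [Fintype V] {G : SimpleGraph V} [DecidableRel G.Adj]

theorem div_eq_div_of_adjMatrix_mulVec_eq_smul (hconn : G.Connected) {x y : V → ℝ}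
    (hy : ∀ u, 0 < y u) {θ μ : ℝ} (hAy : G.adjMatrix ℝ *ᵥ y = θ • y)
    (hAx : G.adjMatrix ℝ *ᵥ x = μ • x) (hθμ : θ ≤ μ) (u v : V) : x u / y u = x v / y v := by
  have hnonneg (a b : V) :
      0 ≤ G.adjMatrix ℝ a b * (y a * y b * (x a / y a - x b / y b) ^ 2) := by
    have := hy a
    have := hy b
    rw [SimpleGraph.adjMatrix_apply]
    positivity
  have hform : ∑ a, ∑ b, G.adjMatrix ℝ a b * (y a * y b * (x a / y a - x b / y b) ^ 2) ≤ 0 := by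
    rw [sum_sum_mul_div_sub_div_sq G.isSymm_adjMatrix (fun u => (hy u).ne') hAy, hAx,
      dotProduct_smul, smul_eq_mul]
    have hxx : 0 ≤ x ⬝ᵥ x := sum_nonneg fun _ _ => mul_self_nonneg _
    linarith [mul_le_mul_of_nonneg_right hθμ hxx]
  have hadj (a b : V) (hab : G.Adj a b) : x a / y a = x b / y b := by
    have hterm : G.adjMatrix ℝ a b * (y a * y b * (x a / y a - x b / y b) ^ 2) ≤ 0 :=
      calc _ ≤ ∑ b, G.adjMatrix ℝ a b * (y a * y b * (x a / y a - x b / y b) ^ 2) :=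
            single_le_sum (fun b _ => hnonneg a b) (mem_univ b)
        _ ≤ _ := single_le_sum (fun a _ => sum_nonneg fun b _ => hnonneg a b) (mem_univ a)
        _ ≤ 0 := hform
    rw [SimpleGraph.adjMatrix_apply, if_pos hab, one_mul] at hterm
    have hsq := nonpos_of_mul_nonpos_right hterm (mul_pos (hy a) (hy b))
    exact sub_eq_zero.mp (sq_nonpos_iff _ |>.mp hsq)
  obtain ⟨p⟩ := hconn.preconnected u v
  induction p with
  | nil => rfl
  | cons hab _ ih => exact (hadj _ _ hab).trans ih

theorem adjMatrix_mulVec_sqrt_degree {K : ℕ}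
    (hK : ∀ u v, G.Adj u v → G.degree u * G.degree v = K) :
    G.adjMatrix ℝ *ᵥ (fun u => √(G.degree u : ℝ)) = √(K : ℝ) • fun u => √(G.degree u : ℝ) := by
  funext u
  rw [SimpleGraph.adjMatrix_mulVec_apply, Pi.smul_apply, smul_eq_mul]
  have hsqrt : √(G.degree u : ℝ) * √(G.degree u : ℝ) = G.degree u :=
    Real.mul_self_sqrt (Nat.cast_nonneg _)
  rcases (G.degree u).eq_zero_or_pos with h0 | hpos
  · have hempty : G.neighborFinset u = ∅ := by
      rwa [← card_eq_zero, SimpleGraph.card_neighborFinset_eq_degree]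
    simp [hempty, h0]
  have hne : √(G.degree u : ℝ) ≠ 0 := (Real.sqrt_pos.mpr (Nat.cast_pos.mpr hpos)).ne'
  have hnbr : ∀ v ∈ G.neighborFinset u, √(G.degree v : ℝ) = √(K : ℝ) / √(G.degree u : ℝ) := by
    intro v hv
    rw [eq_div_iff hne, mul_comm, ← Real.sqrt_mul (Nat.cast_nonneg _), ← Nat.cast_mul,
      hK u v ((G.mem_neighborFinset u v).mp hv)]
  rw [sum_congr rfl hnbr, sum_const, SimpleGraph.card_neighborFinset_eq_degree, nsmul_eq_mul]
  nth_rw 1 [← hsqrt]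
  field

end PositiveEigenvector

section TopProjection

variable {V : Type*} [Fintype V] [DecidableEq V] {G : SimpleGraph V} [DecidableRel G.Adj] {d : ℕ}
  {lam : ℕ → ℝ} {E : ℕ → Matrix V V ℝ}

theorem mem_spectrum_of_mulVec_eq_smul {K : Type*} [Field K] {A : Matrix V V K} {x : V → K}
    (hx : x ≠ 0) {θ : K} (hAx : A *ᵥ x = θ • x) : θ ∈ spectrum K A := by
  rw [← Matrix.spectrum_toLin']
  exact (Module.End.hasEigenvalue_of_hasEigenvector
    ⟨Module.End.mem_eigenspace_iff.mpr (by rwa [toLin'_apply]), hx⟩).mem_spectrum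

theorem topProjection_apply_eq_of_degree_eq (hconn : G.Connected) {K : ℕ}
    (hK : ∀ u v, G.Adj u v → G.degree u * G.degree v = K)
    (h : IsSpectralDecomposition (G.adjMatrix ℝ) d lam E) {a b : V}
    (hab : G.degree a = G.degree b) (c : V) : E 0 a c = E 0 b c := by
  rcases subsingleton_or_nontrivial V with hV | hV
  · rw [Subsingleton.elim a b]
  have hpos (u : V) : 0 < √(G.degree u : ℝ) :=
    Real.sqrt_pos.mpr (Nat.cast_pos.mpr (hconn.preconnected.degree_pos_of_nontrivial u))
  have hsqrt := adjMatrix_mulVec_sqrt_degree hK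
  have htop := h.le_of_mem_spectrum
    (mem_spectrum_of_mulVec_eq_smul (fun h0 => (hpos a).ne' (congrFun h0 a)) hsqrt)
  have hcol : G.adjMatrix ℝ *ᵥ (fun u => E 0 u c) = lam 0 • fun u => E 0 u c :=
    funext fun u => congrFun (congrFun (h.mul_eq_smul 0 d.zero_le) u) c
  have hdiv := div_eq_div_of_adjMatrix_mulVec_eq_smul hconn hpos hsqrt hcol htop a b
  rw [hab] at hdiv
  exact (div_left_inj' (hpos b).ne').mp hdiv

theorem topProjection_apply_eq_meanLocalMultiplicity (hconn : G.Connected) {K : ℕ}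
    (hK : ∀ u v, G.Adj u v → G.degree u * G.degree v = K)
    (h : IsSpectralDecomposition (G.adjMatrix ℝ) d lam E) {S : Finset V} {δ : ℕ}
    (hS : ∀ u ∈ S, G.degree u = δ) {a b : V} (ha : a ∈ S) (hb : b ∈ S) :
    E 0 a b = meanLocalMultiplicity E S 0 := by
  have hrow {u v : V} (hu : u ∈ S) (hv : v ∈ S) (c : V) : E 0 u c = E 0 v c :=
    topProjection_apply_eq_of_degree_eq hconn hK h ((hS u hu).trans (hS v hv).symm) c
  have hsymm : (E 0).IsSymm := by
    rw [← h.aeval_lagrangeBasis (mem_range.mpr d.succ_pos)]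
    exact isSymm_aeval G.isSymm_adjMatrix _
  have hdiag : ∀ u ∈ S, E 0 u u = E 0 a b := fun u hu => by
    rw [hrow hu hb u, hsymm.apply, hrow hu ha b]
  have hcard : (S.card : ℝ) ≠ 0 := Nat.cast_ne_zero.mpr (card_ne_zero_of_mem ha)
  rw [meanLocalMultiplicity, sum_congr rfl hdiag, sum_const, nsmul_eq_mul,
    mul_div_cancel_left₀ _ hcard]

end TopProjection

section Distance

variable {V : Type*} [Fintype V] [DecidableEq V] {G : SimpleGraph V} [DecidableRel G.Adj]
  {R : Type*} [CommRing R] {u v : V}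

theorem adjMatrix_pow_apply_eq_zero_of_lt_dist {n : ℕ} (h : n < G.dist u v) :
    (G.adjMatrix R ^ n) u v = 0 := by
  have : IsEmpty {p : G.Walk u v | p.length = n} :=
    ⟨fun p => (h.trans_le (SimpleGraph.dist_le p.1)).ne' p.2⟩
  rw [SimpleGraph.adjMatrix_pow_apply_eq_card_walk, Fintype.card_eq_zero, Nat.cast_zero]

theorem adjMatrix_pow_dist_apply_ne_zero [CharZero R] (hconn : G.Connected) (u v : V) :
    (G.adjMatrix R ^ G.dist u v) u v ≠ 0 := by
  obtain ⟨p, hp⟩ := hconn.exists_walk_length_eq_dist u v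
  have : Nonempty {p : G.Walk u v | p.length = G.dist u v} := ⟨⟨p, hp⟩⟩
  rw [SimpleGraph.adjMatrix_pow_apply_eq_card_walk]
  exact Nat.cast_ne_zero.mpr Fintype.card_ne_zero

theorem aeval_adjMatrix_apply_of_natDegree_le_dist {f : R[X]} (h : f.natDegree ≤ G.dist u v) :
    aeval (G.adjMatrix R) f u v
      = f.coeff (G.dist u v) * (G.adjMatrix R ^ G.dist u v) u v := by
  rw [aeval_eq_sum_range' (Nat.lt_succ_of_le h), Matrix.sum_apply, sum_range_succ, sum_eq_zero,
    zero_add, Matrix.smul_apply, smul_eq_mul]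
  intro n hn
  rw [Matrix.smul_apply, adjMatrix_pow_apply_eq_zero_of_lt_dist (mem_range.mp hn), smul_zero]

end Distance

section SpectralExcess

variable {V : Type*} [Fintype V] [DecidableEq V] {G : SimpleGraph V} [DecidableRel G.Adj] {d : ℕ}
  {lam : ℕ → ℝ} {E : ℕ → Matrix V V ℝ} {S : Finset V} {p : ℝ[X]}

theorem aeval_predistancePolynomial_apply_eq_one (hconn : G.Connected)
    (h : IsSpectralDecomposition (G.adjMatrix ℝ) d lam E)
    (hp : IsPredistancePolynomial (range (d + 1)) lam (meanLocalMultiplicity E S) d p) {u v : V}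
    (hu : u ∈ S) (huv : G.dist u v = d) (hE : E 0 u v = meanLocalMultiplicity E S 0) :
    aeval (G.adjMatrix ℝ) p u v = 1 := by
  set L := Lagrange.basis (range (d + 1)) lam 0
  set N := (G.adjMatrix ℝ ^ d) u v
  have h0 : 0 ∈ range (d + 1) := mem_range.mpr d.succ_pos
  have hLdeg : L.degree = d := by simpa using Lagrange.degree_basis h.injOn_range h0
  have hN : N ≠ 0 := by
    simpa only [N, huv] using adjMatrix_pow_dist_apply_ne_zero (R := ℝ) hconn u v
  have hentry {f : ℝ[X]} (hf : f.natDegree ≤ d) :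
      aeval (G.adjMatrix ℝ) f u v = f.coeff d * N := by
    subst huv
    exact aeval_adjMatrix_apply_of_natDegree_le_dist hf
  have hpA := hentry hp.natDegree_eq.le
  have hLA : L.coeff d * N = meanLocalMultiplicity E S 0 := by
    rw [← hE, ← h.aeval_lagrangeBasis h0, hentry (natDegree_eq_of_degree_eq_some hLdeg).le]
  have hp0 : p.eval (lam 0) ≠ 0 := by
    rw [← hp.inner_self]
    exact (discInner_meanLocalMultiplicity_self_pos G.isSymm_adjMatrix h hu
      (hpA ▸ mul_ne_zero hp.coeff_ne_zero hN)).ne'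
  have hcoeff : p.coeff d * (L.coeff d * N) = L.coeff d := by
    have := hp.coeff_mul_discInner (natDegree_eq_of_degree_eq_some hLdeg).le
    rw [discInner_lagrangeBasis_right h.injOn_range h0, ← mul_assoc] at this
    rw [hLA, mul_right_cancel₀ hp0 this]
  refine mul_left_cancel₀ (coeff_ne_zero_of_eq_degree hLdeg) ?_
  rw [hpA, mul_one]
  linear_combination hcoeff

/-- Besides semiregular bipartite graphs this covers regular graphs, with `S` the set of all
vertices. -/
theorem stmt_14_general (hconn : G.Connected) {K : ℕ}
    (hK : ∀ u v, G.Adj u v → G.degree u * G.degree v = K) {δ : ℕ}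
    (hdeg : ∀ u ∈ S, G.degree u = δ) (hdist : ∀ u ∈ S, ∀ v, G.dist u v = d → v ∈ S)
    (h : IsSpectralDecomposition (G.adjMatrix ℝ) d lam E)
    (hp : IsPredistancePolynomial (range (d + 1)) lam (meanLocalMultiplicity E S) d p) :
    (1 / (S.card : ℝ)) * ∑ u ∈ S, ((sphere G u d).card : ℝ) ≤ p.eval (lam 0) := by
  have hrow : ∀ u ∈ S, ((sphere G u d).card : ℝ) ≤ ∑ v, aeval (G.adjMatrix ℝ) p u v ^ 2 := by
    intro u hu
    calc ((sphere G u d).card : ℝ)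
        = ∑ v ∈ sphere G u d, aeval (G.adjMatrix ℝ) p u v ^ 2 := by
          rw [card_eq_sum_ones, Nat.cast_sum]
          refine sum_congr rfl fun v hv => ?_
          have huv : G.dist u v = d := (mem_filter.mp hv).2
          rw [aeval_predistancePolynomial_apply_eq_one hconn h hp hu huv
            (topProjection_apply_eq_meanLocalMultiplicity hconn hK h hdeg hu (hdist u hu v huv)),
            one_pow, Nat.cast_one]
      _ ≤ ∑ v, aeval (G.adjMatrix ℝ) p u v ^ 2 :=
          sum_le_univ_sum_of_nonneg fun v => sq_nonneg _
  rw [← hp.inner_self, discInner_meanLocalMultiplicity_self G.isSymm_adjMatrix h,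
    one_div_mul_eq_div]
  gcongr with u hu
  exact hrow u hu

end SpectralExcess

section Bipartite

variable {V : Type*} {G : SimpleGraph V}

theorem isBipartiteWith_of_indep [Fintype V] [DecidableEq V] {s t : Finset V}
    (hcover : s ∪ t = univ) (hdisj : Disjoint s t) (hs : ∀ u ∈ s, ∀ v ∈ s, ¬ G.Adj u v)
    (ht : ∀ u ∈ t, ∀ v ∈ t, ¬ G.Adj u v) : G.IsBipartiteWith (s : Set V) t where
  disjoint := disjoint_coe.mpr hdisj
  mem_of_adj u v huv := by
    have hmem (x : V) : x ∈ s ∨ x ∈ t := mem_union.mp (hcover ▸ mem_univ x)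
    have := hs u
    have := ht u
    grind

theorem mem_left_iff_of_even_length {s t : Set V} (h : G.IsBipartiteWith s t) {u v : V}
    (p : G.Walk u v) (hp : Even p.length) : u ∈ s ↔ v ∈ s := by
  classical
  have hvalid {x y : V} (hxy : G.Adj x y) : decide (x ∈ s) ≠ decide (y ∈ s) := by
    have := Set.disjoint_left.mp h.disjoint
    have := h.mem_of_adj hxy
    grind
  have hside : decide (u ∈ s) = true ↔ decide (v ∈ s) = true :=
    ((SimpleGraph.Coloring.mk _ hvalid).even_length_iff_congr p).mp hp
  simpa only [decide_eq_true_iff] using hside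

theorem mem_left_of_even_dist (hconn : G.Connected) {s t : Set V} (h : G.IsBipartiteWith s t)
    {u v : V} (hu : u ∈ s) (huv : Even (G.dist u v)) : v ∈ s := by
  obtain ⟨p, hp⟩ := hconn.exists_walk_length_eq_dist u v
  exact (mem_left_iff_of_even_length h p (hp ▸ huv)).mp hu

theorem degree_mul_degree_of_semiregular [G.LocallyFinite] {s t : Set V}
    (h : G.IsBipartiteWith s t) {δ₁ δ₂ : ℕ} (hs : ∀ u ∈ s, G.degree u = δ₁)
    (ht : ∀ v ∈ t, G.degree v = δ₂) {u v : V} (huv : G.Adj u v) :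
    G.degree u * G.degree v = δ₁ * δ₂ := by
  rcases h.mem_of_adj huv with ⟨hu, hv⟩ | ⟨hu, hv⟩
  · rw [hs u hu, ht v hv]
  · rw [ht u hu, hs v hv, mul_comm]

end Bipartite

/-- Inequality (5): for a connected bipartite `(δ₁,δ₂)`-semiregular graph with `d+1`
distinct eigenvalues, `d` even and `m(0) ≠ |n₁ − n₂|`, the average number of vertices
at distance `d` from a vertex of `V₁` satisfies `k̄_{1,d} ≤ p_{1,d}(λ_0)`. -/
theorem stmt_14 {V : Type*} [Fintype V] [DecidableEq V]
    (G : SimpleGraph V) [DecidableRel G.Adj] (hconn : G.Connected)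
    (V1 V2 : Finset V) (hcover : V1 ∪ V2 = Finset.univ) (hdisj : Disjoint V1 V2)
    (hind1 : ∀ u ∈ V1, ∀ v ∈ V1, ¬ G.Adj u v)
    (hind2 : ∀ u ∈ V2, ∀ v ∈ V2, ¬ G.Adj u v)
    (δ1 δ2 : ℕ)
    (hdeg1 : ∀ u ∈ V1, G.degree u = δ1) (hdeg2 : ∀ v ∈ V2, G.degree v = δ2)
    (d : ℕ) (lam : ℕ → ℝ) (hlam : StrictAntiOn lam (Set.Iic d))
    (E : ℕ → Matrix V V ℝ)
    (hsym : ∀ i ≤ d, (E i).IsSymm)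
    (hsum : ∑ i ∈ Finset.range (d + 1), E i = 1)
    (hmul : ∀ i ≤ d, ∀ j ≤ d, E i * E j = if i = j then E i else 0)
    (heig : ∀ i ≤ d, G.adjMatrix ℝ * E i = lam i • E i)
    (hnz : ∀ i ≤ d, E i ≠ 0)
    (hEven : Even d)
    -- `m(0) ≠ |n₁ − n₂|`
    (hm0 : ∑ i ∈ (Finset.range (d + 1)).filter (fun i => lam i = 0),
        Matrix.trace (E i) ≠ |(V1.card : ℝ) - (V2.card : ℝ)|)
    -- the orthogonal polynomials for `⟨·,·⟩_{V₁}`, with weights `w_{1,i}`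
    (p1 : ℕ → Polynomial ℝ)
    (hp1deg : ∀ i ≤ d, (p1 i).degree = (i : WithBot ℕ))
    (hp1orth : ∀ i ≤ d, ∀ j ≤ d, i ≠ j →
      discInner (Finset.range (d + 1)) lam
        (fun i => (∑ u ∈ V1, E i u u) / (V1.card : ℝ)) (p1 i) (p1 j) = 0)
    (hp1norm : ∀ i ≤ d,
      discInner (Finset.range (d + 1)) lam
          (fun i => (∑ u ∈ V1, E i u u) / (V1.card : ℝ)) (p1 i) (p1 i)
        = (p1 i).eval (lam 0)) :
    (1 / (V1.card : ℝ)) * ∑ u ∈ V1, ((sphere G u d).card : ℝ)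
      ≤ (p1 d).eval (lam 0) := by
  have hbip := isBipartiteWith_of_indep hcover hdisj hind1 hind2
  have hspec : IsSpectralDecomposition (G.adjMatrix ℝ) d lam E := ⟨hlam, hsum, heig⟩
  have hpred : IsPredistancePolynomial (range (d + 1)) lam (meanLocalMultiplicity E V1) d (p1 d) :=
    .of_orthogonal_family hp1deg (fun i hi => hp1orth d le_rfl i hi.le hi.ne') (hp1norm d le_rfl)
  exact stmt_14_general hconn (fun _ _ => degree_mul_degree_of_semiregular hbip hdeg1 hdeg2) hdeg1
    (fun _ hu _ huv => mem_left_of_even_dist hconn hbip hu (huv ▸ hEven)) hspec hpred
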